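/- Let D be a nonempty finite set, let s : D → ℝ and y : D → ℝ be functions, and let 𝒩_1 and 𝒩_2 be two complete non-overlapping partitionings of D into nonempty subsets such that 𝒩_2 is a sub-partitioning of 𝒩_1, i.e., for every block N ∈ 𝒩_1 there exists a subfamily of blocks of 𝒩_2 whose union is N. With e(N) = (1/|N|)·∑_{u∈N} s(u), o(N) = (1/|N|)·∑_{u∈N} y(u), and ENCE of a partitioning 𝒩 defined as ∑_{N∈𝒩} (|N|/|D|)·|o(N) − e(N)|, it holds that ENCE(𝒩_1) ≤ ENCE(𝒩_2). -/

import Mathlib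

/-!
Since `|N| * |o(N) - e(N)| = |∑ u ∈ N, (y u - s u)|`, the block sizes cancel and `ENCE` is, up to
the factor `1 / |D|`, the sum over the blocks of the absolute values of the block sums of `y - s`.
By the triangle inequality, splitting a block cannot decrease this sum.
-/

section Refinement

variable {ι α M : Type*} [DecidableEq α]

lemma disjoint_of_disjoint_biUnion {S T : Finset ι} {f : ι → Finset α}
    (hS : ∀ i ∈ S, (f i).Nonempty) (h : Disjoint (S.biUnion f) (T.biUnion f)) :
    Disjoint S T := by
  refine Finset.disjoint_left.2 fun i hiS hiT => ?_
  obtain ⟨u, hu⟩ := hS i hiS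
  exact Finset.disjoint_left.1 h (Finset.mem_biUnion.2 ⟨i, hiS, hu⟩)
    (Finset.mem_biUnion.2 ⟨i, hiT, hu⟩)

lemma sum_le_sum_of_forall_exists_biUnion_eq [AddCommMonoid M] [PartialOrder M]
    [IsOrderedAddMonoid M] {P₁ P₂ : Finset (Finset α)} {φ : Finset α → M}
    (h₁disj : (P₁ : Set (Finset α)).PairwiseDisjoint id) (h₂ne : ∀ B ∈ P₂, B.Nonempty)
    (hsub : ∀ N ∈ P₁, ∃ S ⊆ P₂, S.biUnion id = N) (hφ_nonneg : ∀ B ∈ P₂, 0 ≤ φ B)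
    (hφ_subadd : ∀ S ⊆ P₂, φ (S.biUnion id) ≤ ∑ B ∈ S, φ B) :
    ∑ N ∈ P₁, φ N ≤ ∑ B ∈ P₂, φ B := by
  choose! S hS_subset hS_biUnion using hsub
  have hS_disj : (P₁ : Set (Finset α)).PairwiseDisjoint S := fun N hN N' hN' hne =>
    disjoint_of_disjoint_biUnion (f := id) (fun B hB => h₂ne B (hS_subset N hN hB)) <| by
      rw [hS_biUnion N hN, hS_biUnion N' hN']
      exact h₁disj hN hN' hne
  calc
    ∑ N ∈ P₁, φ N ≤ ∑ N ∈ P₁, ∑ B ∈ S N, φ B := Finset.sum_le_sum fun N hN => by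
      simpa only [hS_biUnion N hN] using hφ_subadd (S N) (hS_subset N hN)
    _ = ∑ B ∈ P₁.biUnion S, φ B := (Finset.sum_biUnion hS_disj).symm
    _ ≤ ∑ B ∈ P₂, φ B := Finset.sum_le_sum_of_subset_of_nonneg
      (Finset.biUnion_subset.2 hS_subset) fun B hB _ => hφ_nonneg B hB

lemma norm_sum_biUnion_le {E : Type*} [SeminormedAddCommGroup E] {S : Finset ι}
    {t : ι → Finset α} (hS : (S : Set ι).PairwiseDisjoint t) (f : α → E) :
    ‖∑ u ∈ S.biUnion t, f u‖ ≤ ∑ i ∈ S, ‖∑ u ∈ t i, f u‖ := by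
  rw [Finset.sum_biUnion hS]
  exact norm_sum_le _ _

end Refinement

section Calibration

variable {α E : Type*} [SeminormedAddCommGroup E] [NormedSpace ℝ E]

/-- The Expected Neighborhood Calibration Error of a family `P` of blocks in a dataset `D`, with
confidence scores `s` and labels `y`. Scores and labels are vectors so as to include multiclass
classifiers, whose labels are one-hot vectors. The family need not cover `D`. -/
noncomputable def ence (D : Finset α) (s y : α → E) (P : Finset (Finset α)) : ℝ :=
  ∑ N ∈ P, (N.card : ℝ) / (D.card : ℝ) *
    ‖(N.card : ℝ)⁻¹ • ∑ u ∈ N, y u - (N.card : ℝ)⁻¹ • ∑ u ∈ N, s u‖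

lemma card_mul_norm_mean_sub_mean (N : Finset α) (s y : α → E) :
    (N.card : ℝ) * ‖(N.card : ℝ)⁻¹ • ∑ u ∈ N, y u - (N.card : ℝ)⁻¹ • ∑ u ∈ N, s u‖ =
      ‖∑ u ∈ N, (y u - s u)‖ := by
  obtain rfl | hN := N.eq_empty_or_nonempty
  · simp
  have hcard : (N.card : ℝ) ≠ 0 := Nat.cast_ne_zero.2 hN.card_ne_zero
  rw [← smul_sub, ← Finset.sum_sub_distrib, norm_smul, norm_inv, Real.norm_natCast,
    mul_inv_cancel_left₀ hcard]

lemma ence_eq_sum_norm_div (D : Finset α) (s y : α → E) (P : Finset (Finset α)) :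
    ence D s y P = (∑ N ∈ P, ‖∑ u ∈ N, (y u - s u)‖) / D.card := by
  simp only [ence, div_mul_eq_mul_div, card_mul_norm_mean_sub_mean, Finset.sum_div]

theorem ence_le_of_subpartition_general [DecidableEq α] {D : Finset α} (hD : D.Nonempty)
    (s y : α → E) {P₁ P₂ : Finset (Finset α)}
    (h₁disj : (P₁ : Set (Finset α)).PairwiseDisjoint id)
    (h₂ne : ∀ N ∈ P₂, N.Nonempty) (h₂disj : (P₂ : Set (Finset α)).PairwiseDisjoint id)
    (hsub : ∀ N ∈ P₁, ∃ S ⊆ P₂, S.biUnion id = N) :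
    ence D s y P₁ ≤ ence D s y P₂ := by
  have hcard : (0 : ℝ) < D.card := Nat.cast_pos.2 hD.card_pos
  rw [ence_eq_sum_norm_div, ence_eq_sum_norm_div, div_le_div_iff_of_pos_right hcard]
  exact sum_le_sum_of_forall_exists_biUnion_eq h₁disj h₂ne hsub (fun _ _ => norm_nonneg _)
    fun S hS => norm_sum_biUnion_le (h₂disj.subset (Finset.coe_subset.2 hS)) _

end Calibration

/-- **Sub-partitioning has greater or equal ENCE.**
Let `D` be a nonempty finite set, `s y : α → ℝ`, and let `P₁, P₂` be two complete
non-overlapping partitionings of `D` into nonempty blocks such that `P₂` is a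
sub-partitioning of `P₁` (every block of `P₁` is a union of a subfamily of blocks of
`P₂`). With `e(N) = (∑ u ∈ N, s u) / |N|`, `o(N) = (∑ u ∈ N, y u) / |N|`, and
`ENCE(P) = ∑ N ∈ P, (|N| / |D|) * |o(N) - e(N)|`, we have `ENCE(P₁) ≤ ENCE(P₂)`. -/
theorem ence_le_of_subpartition {α : Type*} [DecidableEq α]
    (D : Finset α) (hD : D.Nonempty) (s y : α → ℝ)
    (P₁ P₂ : Finset (Finset α))
    (h₁ne : ∀ N ∈ P₁, N.Nonempty)
    (h₁disj : (P₁ : Set (Finset α)).PairwiseDisjoint id)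
    (h₁union : P₁.biUnion id = D)
    (h₂ne : ∀ N ∈ P₂, N.Nonempty)
    (h₂disj : (P₂ : Set (Finset α)).PairwiseDisjoint id)
    (h₂union : P₂.biUnion id = D)
    (hsub : ∀ N ∈ P₁, ∃ S ⊆ P₂, S.biUnion id = N) :
    ∑ N ∈ P₁, (N.card : ℝ) / (D.card : ℝ) *
        |(∑ u ∈ N, y u) / (N.card : ℝ) - (∑ u ∈ N, s u) / (N.card : ℝ)| ≤
      ∑ N ∈ P₂, (N.card : ℝ) / (D.card : ℝ) *
        |(∑ u ∈ N, y u) / (N.card : ℝ) - (∑ u ∈ N, s u) / (N.card : ℝ)| := by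
  simpa only [ence, smul_eq_mul, inv_mul_eq_div, Real.norm_eq_abs] using
    ence_le_of_subpartition_general hD s y h₁disj h₂ne h₂disj hsub
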